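/- arXiv:1011.3654 — 2 statements merged into one kernel-verified Lean document; each statement's English description precedes it below -/
import Mathlib

section
/- Let m ≥ 1 be an integer, σ a permutation of {1,…,n}, and ζ_1,…,ζ_n ∈ K scalars with ζ_j^m = 1 for all j. Let w : K[X] → K[X] be the K-algebra automorphism determined by x_{ij} ↦ ζ_j·x_{i,σ(j)} for all i, j (the diagonal action of an element of the generalized symmetric group G(m,n)). If f ∈ K[X] is diagonally (G(m,n),q)-harmonic, then so is w(f). -/
/-! Write `w` for the diagonal action. The chain rule gives `∂_{i,σ(j)} ∘ w = ζ_j • w ∘ ∂_{ij}`,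
hence `∂_{σ(j)}^d ∘ w = ζ_j ^ |d| • w ∘ ∂_j^d`, where the scalar is `1` when `m ∣ |d|`. In the Euler
operator of a column the factor `ζ_j` is absorbed by `w x_{ij} = ζ_j x_{i,σ(j)}`. Reindexing the sum
over columns by `σ`, the operator `D_{q,d}` commutes with `w`. -/

open MvPolynomial

/-- The operator `∂_j^d = ∂_{1j}^{d 1} ⋯ ∂_{ℓj}^{d ℓ}` on `K[X]`,
`X` an `ℓ × n` matrix of variables. -/
noncomputable def pdj {K : Type*} [Field K] {ℓ n : ℕ} (d : Fin ℓ → ℕ) (j : Fin n) :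
    Module.End K (MvPolynomial (Fin ℓ × Fin n) K) :=
  ((List.finRange ℓ).map fun i =>
    ((pderiv (i, j)).toLinearMap : Module.End K (MvPolynomial (Fin ℓ × Fin n) K)) ^ d i).prod

/-- The deformed operator
`D_{q,d} = ∑_j (1 + q (x_{1j}∂_{1j} + ⋯ + x_{ℓj}∂_{ℓj})) ∘ ∂_j^d` on `K[X]`. -/
noncomputable def Dq {K : Type*} [Field K] (ℓ n : ℕ) (q : K) (d : Fin ℓ → ℕ) :
    Module.End K (MvPolynomial (Fin ℓ × Fin n) K) :=
  ∑ j : Fin n,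
    (1 + q • ∑ i : Fin ℓ,
        (LinearMap.mulLeft K (X (i, j)) * (pderiv (i, j)).toLinearMap)) * pdj d j

section Intertwining

variable {R M N ι : Type*} [CommSemiring R] [AddCommMonoid M] [AddCommMonoid N] [Module R M]
  [Module R N]

theorem pow_comp_of_comp_eq_smul_comp {φ : M →ₗ[R] N} {A : Module.End R M} {B : Module.End R N}
    {c : R} (h : B ∘ₗ φ = c • φ ∘ₗ A) (k : ℕ) : (B ^ k) ∘ₗ φ = c ^ k • φ ∘ₗ A ^ k := by
  rw [Module.End.commute_pow_left_of_commute (h.trans (LinearMap.comp_smul φ c A).symm), smul_pow,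
    LinearMap.comp_smul]

theorem list_prod_comp_of_comp_eq_smul_comp {φ : M →ₗ[R] N} {A : ι → Module.End R M}
    {B : ι → Module.End R N} {c : ι → R} (h : ∀ i, B i ∘ₗ φ = c i • φ ∘ₗ A i) (l : List ι) :
    (l.map B).prod ∘ₗ φ = (l.map c).prod • φ ∘ₗ (l.map A).prod := by
  induction l with
  | nil => simp [Module.End.one_eq_id]
  | cons i l ih =>
    simp only [List.map_cons, List.prod_cons, Module.End.mul_eq_comp]
    rw [LinearMap.comp_assoc, ih, LinearMap.comp_smul, ← LinearMap.comp_assoc, h,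
      LinearMap.smul_comp, smul_smul, mul_comm, LinearMap.comp_assoc]

end Intertwining

section ScaledRename

variable {R ι κ : Type*} [CommSemiring R]

/-- The substitution `X s ↦ c s * X (e s)`: `MvPolynomial.rename e` with each variable also
rescaled, as under the action of a monomial matrix. -/
noncomputable def scaledRename (c : ι → R) (e : ι → κ) : MvPolynomial ι R →ₐ[R] MvPolynomial κ R :=
  aeval fun s => C (c s) * X (e s)

theorem scaledRename_X (c : ι → R) (e : ι → κ) (s : ι) :
    scaledRename c e (X s) = C (c s) * X (e s) :=
  aeval_X _ s

theorem pderiv_scaledRename (c : ι → R) {e : ι → κ} (he : Function.Injective e) (s : ι)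
    (p : MvPolynomial ι R) :
    pderiv (e s) (scaledRename c e p) = c s • scaledRename c e (pderiv s p) := by
  classical
  have pderiv_image_X (t : ι) : pderiv (e s) (scaledRename c e (X t)) =
      c s • scaledRename c e (pderiv s (X t)) := by
    obtain rfl | hts := eq_or_ne t s
    · simp [scaledRename_X, smul_eq_C_mul]
    · simp [scaledRename_X, pderiv_X_of_ne hts, pderiv_X_of_ne (he.ne hts)]
  induction p using MvPolynomial.induction_on with
  | C a => simp [← algebraMap_eq]
  | add p r hp hr => simp only [map_add, hp, hr, smul_add]
  | mul_X p t hp =>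
    simp only [map_mul, Derivation.leibniz, map_add, hp, pderiv_image_X, smul_eq_mul, smul_add,
      mul_smul_comm]

theorem X_mul_pderiv_scaledRename (c : ι → R) {e : ι → κ} (he : Function.Injective e) (s : ι)
    (p : MvPolynomial ι R) :
    X (e s) * pderiv (e s) (scaledRename c e p) = scaledRename c e (X s * pderiv s p) := by
  rw [pderiv_scaledRename c he, map_mul, scaledRename_X, smul_eq_C_mul]
  ring

end ScaledRename

section DiagonalAction

variable {R ι κ : Type*} [CommSemiring R]

/-- The diagonal action `x_{ij} ↦ ζ_j x_{i,σ(j)}` of a monomial matrix on polynomials in an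
`ι × κ` matrix of variables; elements of `G(m,n)` have `κ = Fin n` and `ζ_j ^ m = 1`. -/
noncomputable def diagonalAction (σ : Equiv.Perm κ) (ζ : κ → R) :
    MvPolynomial (ι × κ) R →ₐ[R] MvPolynomial (ι × κ) R :=
  scaledRename (fun v => ζ v.2) (Prod.map id σ)

theorem pderiv_diagonalAction (σ : Equiv.Perm κ) (ζ : κ → R) (i : ι) (j : κ)
    (p : MvPolynomial (ι × κ) R) :
    pderiv (i, σ j) (diagonalAction σ ζ p) = ζ j • diagonalAction σ ζ (pderiv (i, j) p) :=
  pderiv_scaledRename _ (Function.injective_id.prodMap σ.injective) (i, j) p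

/-- The Euler operator `∑ i, x_{ij} ∂_{ij}` of the `j`-th column of variables. -/
noncomputable def columnEuler [Fintype ι] (j : κ) : Module.End R (MvPolynomial (ι × κ) R) :=
  ∑ i, LinearMap.mulLeft R (X (i, j)) * (pderiv (i, j)).toLinearMap

theorem columnEuler_apply [Fintype ι] (j : κ) (p : MvPolynomial (ι × κ) R) :
    columnEuler j p = ∑ i, X (i, j) * pderiv (i, j) p := by
  simp [columnEuler]

theorem columnEuler_diagonalAction [Fintype ι] (σ : Equiv.Perm κ) (ζ : κ → R) (j : κ)
    (p : MvPolynomial (ι × κ) R) :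
    columnEuler (σ j) (diagonalAction σ ζ p) = diagonalAction σ ζ (columnEuler j p) := by
  simp only [columnEuler_apply, map_sum]
  exact Finset.sum_congr rfl fun i _ =>
    X_mul_pderiv_scaledRename _ (Function.injective_id.prodMap σ.injective) (i, j) p

end DiagonalAction

section DeformedOperator

variable {K : Type*} [Field K] {ℓ n : ℕ}

theorem pdj_diagonalAction (σ : Equiv.Perm (Fin n)) (ζ : Fin n → K) (d : Fin ℓ → ℕ) (j : Fin n)
    (p : MvPolynomial (Fin ℓ × Fin n) K) :
    pdj d (σ j) (diagonalAction σ ζ p) =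
      ζ j ^ (∑ i, d i) • diagonalAction σ ζ (pdj d j p) := by
  have pderiv_comp (i : Fin ℓ) :
      (pderiv (i, σ j)).toLinearMap ∘ₗ (diagonalAction σ ζ).toLinearMap =
        ζ j • (diagonalAction σ ζ).toLinearMap ∘ₗ (pderiv (i, j)).toLinearMap :=
    LinearMap.ext (pderiv_diagonalAction σ ζ i j)
  have pdj_comp := list_prod_comp_of_comp_eq_smul_comp
    (fun i => pow_comp_of_comp_eq_smul_comp (pderiv_comp i) (d i)) (List.finRange ℓ)
  rw [← Fin.prod_univ_def, Finset.prod_pow_eq_pow_sum] at pdj_comp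
  exact LinearMap.congr_fun pdj_comp p

theorem Dq_apply (q : K) (d : Fin ℓ → ℕ) (p : MvPolynomial (Fin ℓ × Fin n) K) :
    Dq ℓ n q d p = ∑ j, (pdj d j p + q • columnEuler j (pdj d j p)) := by
  simp [Dq, columnEuler]

theorem Dq_diagonalAction (q : K) (σ : Equiv.Perm (Fin n)) {ζ : Fin n → K} {d : Fin ℓ → ℕ}
    (hζ : ∀ j, ζ j ^ (∑ i, d i) = 1) (p : MvPolynomial (Fin ℓ × Fin n) K) :
    Dq ℓ n q d (diagonalAction σ ζ p) = diagonalAction σ ζ (Dq ℓ n q d p) := by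
  simp only [Dq_apply, map_sum, map_add, map_smul]
  rw [← Equiv.sum_comp σ]
  simp only [pdj_diagonalAction, hζ, one_smul, columnEuler_diagonalAction]

end DeformedOperator

theorem qHarmonic_stable_under_action_general {K : Type*} [Field K] {ℓ n : ℕ} (q : K)
    (σ : Equiv.Perm (Fin n)) {ζ : Fin n → K} {d : Fin ℓ → ℕ}
    (hζ : ∀ j, ζ j ^ (∑ i, d i) = 1) {f : MvPolynomial (Fin ℓ × Fin n) K}
    (hf : Dq ℓ n q d f = 0) :
    Dq ℓ n q d (aeval (fun v : Fin ℓ × Fin n => C (ζ v.2) * X (v.1, σ v.2)) f) = 0 :=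
  (Dq_diagonalAction q σ hζ f).trans (by rw [hf, map_zero])

/-- The diagonal action of an element of `G(m,n)` preserves the space of diagonally
`(G(m,n),q)`-harmonic polynomials. -/
theorem qHarmonic_stable_under_action {K : Type*} [Field K] [CharZero K] {ℓ n : ℕ}
    (hℓ : 1 ≤ ℓ) (hn : 1 ≤ n) (q : K) (m : ℕ) (hm : 1 ≤ m)
    (σ : Equiv.Perm (Fin n)) (ζ : Fin n → K) (hζ : ∀ j, ζ j ^ m = 1)
    (f : MvPolynomial (Fin ℓ × Fin n) K)
    (hf : ∀ d : Fin ℓ → ℕ, (∃ k : ℕ, 0 < k ∧ ∑ i, d i = m * k) → Dq ℓ n q d f = 0) :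
    ∀ d : Fin ℓ → ℕ, (∃ k : ℕ, 0 < k ∧ ∑ i, d i = m * k) →
      Dq ℓ n q d
        (aeval (fun v : Fin ℓ × Fin n => C (ζ v.2) * X (v.1, σ v.2)) f) = 0 :=
  fun _ ⟨k, hk, hd⟩ => qHarmonic_stable_under_action_general q σ
    (fun j => by rw [hd, pow_mul, hζ, one_pow]) (hf _ ⟨k, hk, hd⟩)
end

section
/- Let m ≥ 1 and let α, β be integers with α ≥ m and β ≥ m. Then the determinant of the 3×3 matrix [[⟨α+m⟩_m, ⟨β⟩_m, 0], [0, ⟨α⟩_m, ⟨β+m⟩_m], [⟨α+m⟩_{2m}, 0, ⟨β+m⟩_{2m}]] equals ((α+m)!·(β+m)!/((α−m)!·(β−m)!))·(1 + q(α−m))·(1 + q(β−m))·(2 + q(α+β)). -/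
/-- The deformed Pochhammer symbol `⟨d⟩_k = d(d-1)⋯(d-k+1)(1 + q(d-k))`. -/
noncomputable def tp {K : Type*} [Field K] (q : K) (d k : ℕ) : K :=
  (∏ i ∈ Finset.range k, ((d : K) - (i : K))) * (1 + q * ((d : K) - (k : K)))

theorem tp_eq_descFactorial_mul {K : Type*} [Field K] (q : K) (d k : ℕ) :
    tp q d k = d.descFactorial k * (1 + q * (d - k)) := by
  rw [tp, ← descPochhammer_eval_eq_prod_range, descPochhammer_eval_eq_descFactorial]

theorem descFactorial_add_add (n m k : ℕ) :
    (n + m).descFactorial (m + k) = n.descFactorial k * (n + m).descFactorial m := by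
  simpa only [Nat.add_sub_cancel, Nat.add_sub_cancel_left] using
    (Nat.descFactorial_mul_descFactorial (n := n + m) (Nat.le_add_right m k)).symm

theorem cast_descFactorial_eq_div {K : Type*} [DivisionRing K] [CharZero K] {n k : ℕ}
    (h : k ≤ n) : (n.descFactorial k : K) = n.factorial / (n - k).factorial := by
  rw [Nat.descFactorial_eq_div h,
    Nat.cast_div_charZero (Nat.factorial_dvd_factorial (Nat.sub_le n k))]

theorem det_fin_three_cyclic {R : Type*} [CommRing R] (a b c d e f : R) :
    !![a, b, 0; 0, c, d; e, 0, f].det = a * c * f + b * d * e := by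
  simp [Matrix.det_fin_three]

-- Both triple products in the determinant contain the same falling factorials, so they differ
-- only in one linear factor, `1 + q * α` against `1 + q * β`; these add up to `2 + q * (α + β)`.
theorem det_singular_values_general {K : Type*} [Field K] (q : K) (m α β : ℕ) :
    (!![tp q (α + m) m, tp q β m, 0;
        0, tp q α m, tp q (β + m) m;
        tp q (α + m) (2 * m), 0, tp q (β + m) (2 * m)] : Matrix (Fin 3) (Fin 3) K).det
      = ((α + m).descFactorial (2 * m) * (β + m).descFactorial (2 * m))
          * ((1 + q * (α - m)) * (1 + q * (β - m)) * (2 + q * (α + β))) := by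
  simp only [det_fin_three_cyclic, tp_eq_descFactorial_mul, two_mul, descFactorial_add_add]
  push_cast
  ring

/-- The determinant of the `3×3` system controlling `q`-harmonicity for `G(m,2)`. -/
theorem det_singular_values {K : Type*} [Field K] [CharZero K] (q : K)
    (m α β : ℕ) (hm : 1 ≤ m) (hα : m ≤ α) (hβ : m ≤ β) :
    (!![tp q (α + m) m, tp q β m, 0;
        0, tp q α m, tp q (β + m) m;
        tp q (α + m) (2 * m), 0, tp q (β + m) (2 * m)] : Matrix (Fin 3) (Fin 3) K).det
      = (((α + m).factorial : K) * ((β + m).factorial : K) /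
            (((α - m).factorial : K) * ((β - m).factorial : K)))
          * ((1 + q * ((α : K) - (m : K))) * (1 + q * ((β : K) - (m : K)))
              * (2 + q * ((α : K) + (β : K)))) := by
  have add_sub_two_mul (n : ℕ) : n + m - 2 * m = n - m := by lia
  rw [det_singular_values_general, cast_descFactorial_eq_div (by lia),
    cast_descFactorial_eq_div (by lia), add_sub_two_mul, add_sub_two_mul, div_mul_div_comm]
end
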